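/- arXiv:2605.20526 — 8 statements merged into one kernel-verified Lean document; each statement's English description precedes it below -/
import Mathlib

section
/- Let H be a finite connected simple graph with at least two vertices and let σ → τ be an arc of the state digraph D(H). Then X_τ ⊆ R_σ and X_σ ⊆ L_τ. -/
/-! Two balls at centre distance `r + s + 1` with radii `r` and `s` are disjoint by the triangle
inequality. A vertex of the second ball is joined to its centre by a walk of length at most `s`,
all of whose vertices stay in that ball and hence avoid the first one. A connected component of the
complement of the first ball that contains the centre of the second therefore contains the whole
walk. Both inclusions are instances of this. -/

open scoped Classical

namespace BD

variable {V : Type*}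

/-- The ball of radius `p` around `v`: all vertices at graph distance at most `p`. -/
def ball (G : SimpleGraph V) (v : V) (p : ℕ) : Set V := {x | G.dist v x ≤ p}

/-- Open neighborhood of a vertex set: vertices outside `S` adjacent to some vertex of `S`. -/
def nbhd (G : SimpleGraph V) (S : Set V) : Set V :=
  {x | x ∉ S ∧ ∃ y ∈ S, G.Adj y x}

/-- A broadcast is dominating if every vertex lies in the ball of some active vertex. -/
def Dominating (G : SimpleGraph V) (f : V → ℕ) : Prop :=
  ∀ u, ∃ v, 0 < f v ∧ u ∈ ball G v (f v)

/-- A broadcast is efficient if the balls of distinct active vertices are pairwise disjoint. -/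
def Efficient (G : SimpleGraph V) (f : V → ℕ) : Prop :=
  ∀ u v, 0 < f u → 0 < f v → u ≠ v → Disjoint (ball G u (f u)) (ball G v (f v))

/-- The cost of a broadcast: the sum of its values. -/
def cost [Fintype V] (f : V → ℕ) : ℕ := ∑ v, f v

/-- Adjacency in the domination graph of a broadcast: distinct active vertices whose
balls are joined by an edge of `G`. -/
def DomAdj (G : SimpleGraph V) (f : V → ℕ) (u v : V) : Prop :=
  0 < f u ∧ 0 < f v ∧ u ≠ v ∧ ∃ x ∈ ball G u (f u), ∃ y ∈ ball G v (f v), G.Adj x y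

/-- The domination graph of the broadcast `f` is a path: the active vertices can be
enumerated as `a 0, …, a (t-1)` so that domination-graph adjacency is exactly
consecutiveness in this enumeration. -/
def PathShaped (G : SimpleGraph V) (f : V → ℕ) : Prop :=
  ∃ (t : ℕ) (a : ℕ → V), 1 ≤ t ∧
    (∀ i j, i < t → j < t → a i = a j → i = j) ∧
    (∀ v, 0 < f v ↔ ∃ i, i < t ∧ a i = v) ∧
    (∀ i j, i < t → j < t → (DomAdj G f (a i) (a j) ↔ (i + 1 = j ∨ j + 1 = i)))

/-- `γ_path`: minimum cost of an efficient dominating broadcast whose domination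
graph is a path. -/
noncomputable def gammaPath (G : SimpleGraph V) [Fintype V] : ℕ :=
  sInf {c | ∃ f, Dominating G f ∧ Efficient G f ∧ PathShaped G f ∧ cost f = c}

/-- `γ_b`: minimum cost of a dominating broadcast. -/
noncomputable def gammaB (G : SimpleGraph V) [Fintype V] : ℕ :=
  sInf {c | ∃ f, Dominating G f ∧ cost f = c}

/-- Eccentricity of a vertex. -/
noncomputable def ecc [Fintype V] (G : SimpleGraph V) (v : V) : ℕ :=
  Finset.univ.sup (fun x => G.dist v x)

/-- Radius of a graph. -/
noncomputable def radius [Fintype V] [Nonempty V] (G : SimpleGraph V) : ℕ :=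
  Finset.univ.inf' Finset.univ_nonempty (ecc G)

/-- `C` is a connected component (as a vertex set) of the subgraph of `G` induced on `S`:
a maximal nonempty connected subset of `S`. -/
def IsCompOf (G : SimpleGraph V) (S C : Set V) : Prop :=
  C.Nonempty ∧ C ⊆ S ∧ (G.induce C).Connected ∧
    ∀ D : Set V, C ⊆ D → D ⊆ S → (G.induce D).Connected → D = C

/-- A state of the state digraph `D(H)`: an oriented ball `(c, r)` together with its
left and right residual sides `L`, `R`, which partition the complement of the ball and
each of which is empty or a connected component of the residual graph. -/
structure GState (G : SimpleGraph V) where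
  c : V
  r : ℕ
  L : Set V
  R : Set V
  r_pos : 1 ≤ r
  disj : L ∩ R = ∅
  union : L ∪ R = (ball G c r)ᶜ
  hL : L = ∅ ∨ IsCompOf G ((ball G c r)ᶜ) L
  hR : R = ∅ ∨ IsCompOf G ((ball G c r)ᶜ) R

/-- The ball of a state. -/
def Xball {G : SimpleGraph V} (σ : GState G) : Set V := ball G σ.c σ.r

/-- The arc relation of the state digraph `D(H)`: conditions (A1)–(A4). -/
def Arc {G : SimpleGraph V} (σ τ : GState G) : Prop :=
  σ.R.Nonempty ∧ τ.L.Nonempty ∧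
  G.dist σ.c τ.c = σ.r + τ.r + 1 ∧
  τ.c ∈ σ.R ∧ σ.c ∈ τ.L ∧
  nbhd G (Xball σ) ∩ σ.R ⊆ Xball τ ∧
  nbhd G (Xball τ) ∩ τ.L ⊆ Xball σ

end BD


namespace BD

variable {V : Type*} {G : SimpleGraph V}

/-- A component of the subgraph induced on `S` is closed under passing to neighbours in `S`. -/
lemma IsCompOf.mem_of_adj {S C : Set V} (hC : IsCompOf G S C) {x y : V} (hy : y ∈ C)
    (hx : x ∈ S) (hxy : G.Adj x y) : x ∈ C := by
  obtain ⟨-, hCS, hconn, hmax⟩ := hC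
  have h : (G.induce (C ∪ {x, y})).Connected :=
    SimpleGraph.induce_union_connected hconn.preconnected
      (SimpleGraph.induce_pair_connected_of_adj hxy).preconnected ⟨y, hy, by simp⟩
  have hsub : C ∪ {x, y} ⊆ S := by
    rintro z (hz | rfl | rfl)
    exacts [hCS hz, hx, hCS hy]
  rw [← hmax _ Set.subset_union_left hsub h]
  simp

/-- A component of the complement of a ball contains every second ball centred in it whose centre is
at distance exactly one more than the sum of the radii, since the two balls are then disjoint. -/
lemma ball_subset_of_isCompOf (hG : G.Connected) {c d : V} {r s : ℕ} {C : Set V}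
    (hC : IsCompOf G (ball G c r)ᶜ C) (hd : d ∈ C) (hdist : G.dist c d = r + s + 1) :
    ball G d s ⊆ C := by
  have key : ∀ (x e : V) (p : G.Walk x e), e = d → p.length ≤ s → x ∈ C := by
    intro x e p
    induction p with
    | nil => rintro rfl -; exact hd
    | @cons x y e hxy p ih =>
      rintro rfl hp
      have hle := (SimpleGraph.dist_le (SimpleGraph.Walk.cons hxy p)).trans hp
      rw [SimpleGraph.Walk.length_cons] at hp
      refine hC.mem_of_adj (ih rfl (by lia)) ?_ hxy
      intro hx
      have hx' : G.dist c x ≤ r := hx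
      have := hG.dist_triangle (u := c) (v := x) (w := e)
      lia
  intro x hx
  obtain ⟨p, hp⟩ := hG.exists_walk_length_eq_dist x d
  refine key x d p rfl ?_
  rw [hp, SimpleGraph.dist_comm]
  exact hx

end BD

/-- If `σ → τ` is an arc of the state digraph `D(H)`,
then `X_τ ⊆ R_σ` and `X_σ ⊆ L_τ`. -/
theorem arc_containment {V : Type*} [Fintype V] (H : SimpleGraph V)
    (hconn : H.Connected) (hcard : 1 < Fintype.card V)
    (σ τ : BD.GState H) (h : BD.Arc σ τ) :
    BD.Xball τ ⊆ σ.R ∧ BD.Xball σ ⊆ τ.L := by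
  obtain ⟨-, -, hdist, hτ, hσ, -, -⟩ := h
  constructor
  · exact BD.ball_subset_of_isCompOf hconn
      (σ.hR.resolve_left (Set.nonempty_iff_ne_empty.mp ⟨_, hτ⟩)) hτ hdist
  · refine BD.ball_subset_of_isCompOf hconn
      (τ.hL.resolve_left (Set.nonempty_iff_ne_empty.mp ⟨_, hσ⟩)) hσ ?_
    rw [SimpleGraph.dist_comm, hdist, Nat.add_comm σ.r]
end

section
/- Let H be a finite connected simple graph with at least two vertices and let σ₁, …, σ_t be a directed path in the state digraph D(H) (each σ_i → σ_{i+1} an arc). If i < j then X_j ⊆ R_{σ_i}, and if j < i then X_j ⊆ L_{σ_i}, where X_k denotes X_{σ_k}. In particular the balls X_1, …, X_t are pairwise disjoint. -/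
/-!
Both residual sides of a state are closed under stepping along an edge that avoids the ball:
two different components of the complement of the ball are not joined by an edge.

Let `σ → τ` be an arc. The centers are at distance `r_σ + r_τ + 1`, so the balls are disjoint.
The ball of `τ` is connected, avoids the ball of `σ` and meets `R_σ` in its center, hence it lies
in `R_σ` (`Xball_subset_R`). The set `R_τ` is joined to the ball of `τ` because `H` is connected,
and it avoids the ball of `σ`, which lies in `L_τ`; hence `R_τ ⊆ R_σ` (`R_subset_R`).
So the right sides decrease along the path, and `X_j ⊆ R_{j-1} ⊆ R_i` for `i < j`.
Exchanging the two sides of every state reverses all arcs, which gives the statement for the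
left sides.
-/


open scoped Classical

namespace BD

variable {V : Type*} {G : SimpleGraph V}

/-- The same ball with its two sides exchanged. -/
def GState.swap (σ : GState G) : GState G where
  c := σ.c
  r := σ.r
  L := σ.R
  R := σ.L
  r_pos := σ.r_pos
  disj := by rw [Set.inter_comm]; exact σ.disj
  union := by rw [Set.union_comm]; exact σ.union
  hL := σ.hR
  hR := σ.hL

theorem Arc.swap {σ τ : GState G} (h : Arc σ τ) : Arc τ.swap σ.swap := by
  obtain ⟨h1, h2, h3, h4, h5, h6, h7⟩ := h
  refine ⟨h2, h1, ?_, h5, h4, h7, h6⟩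
  change G.dist τ.c σ.c = τ.r + σ.r + 1
  rw [G.dist_comm, h3, Nat.add_comm σ.r]

theorem not_mem_Xball_of_mem_R {σ : GState G} {x : V} (hx : x ∈ σ.R) : x ∉ Xball σ := by
  have : x ∈ (ball G σ.c σ.r)ᶜ := σ.union ▸ Or.inr hx
  exact this

/-- An edge leaving `R_σ` ends in the ball: an edge to `L_σ` would make `L_σ ∪ R_σ` connected,
against the maximality of `R_σ`. -/
theorem mem_R_of_adj {σ : GState G} {x y : V} (hx : x ∈ σ.R) (hxy : G.Adj x y)
    (hy : y ∉ Xball σ) : y ∈ σ.R := by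
  have hy' : y ∈ σ.L ∪ σ.R := by rw [σ.union]; exact hy
  rcases hy' with hyL | hyR
  · rcases σ.hL with h | hL
    · exact absurd hyL (by simp [h])
    rcases σ.hR with h | hR
    · exact absurd hx (by simp [h])
    have hc : (G.induce (σ.R ∪ σ.L)).Connected :=
      SimpleGraph.connected_induce_union hR.2.2.1.preconnected hL.2.2.1.preconnected
        hx hyL hxy
    have he := hR.2.2.2 _ Set.subset_union_left (Set.union_subset hR.2.1 hL.2.1) hc
    exact he ▸ Or.inr hyL
  · exact hyR

theorem Arc.disjoint (hG : G.Connected) {σ τ : GState G} (h : Arc σ τ) {x : V}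
    (hx : x ∈ Xball τ) : x ∉ Xball σ := by
  intro hx'
  have h1 : G.dist τ.c x ≤ τ.r := hx
  have h2 : G.dist σ.c x ≤ σ.r := hx'
  have h3 := h.2.2.1
  have h4 := hG.dist_triangle (u := σ.c) (v := x) (w := τ.c)
  rw [G.dist_comm (u := x)] at h4
  omega

theorem Arc.Xball_subset_R (hG : G.Connected) {σ τ : GState G} (h : Arc σ τ) :
    Xball τ ⊆ σ.R := by
  have key : ∀ n, ∀ v, G.dist τ.c v = n → n ≤ τ.r → v ∈ σ.R := by
    intro n
    induction n with
    | zero =>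
      intro v hv _
      rw [← hG.dist_eq_zero_iff.mp hv]
      exact h.2.2.2.1
    | succ n ih =>
      intro v hv hn
      -- The neighbor `w` of `v` on a geodesic to the center is at distance exactly `n`.
      obtain ⟨p, hp⟩ := hG.exists_walk_length_eq_dist v τ.c
      rw [G.dist_comm, hv] at hp
      cases p with
      | nil => simp at hp
      | @cons _ w _ hvw q =>
        have h1 : G.dist τ.c w ≤ n := by
          have h2 := SimpleGraph.dist_le q
          rw [SimpleGraph.Walk.length_cons] at hp
          rw [G.dist_comm]
          omega
        have h3 : G.dist τ.c v ≤ G.dist τ.c w + 1 := by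
          have h4 := hG.dist_triangle (u := τ.c) (v := w) (w := v)
          rwa [SimpleGraph.dist_eq_one_iff_adj.mpr hvw.symm] at h4
        refine mem_R_of_adj (ih w (by omega) (by omega)) hvw.symm (h.disjoint hG ?_)
        exact hv.trans_le hn
  exact fun v hv => key _ v rfl hv

theorem Arc.Xball_subset_L (hG : G.Connected) {σ τ : GState G} (h : Arc σ τ) :
    Xball σ ⊆ τ.L :=
  h.swap.Xball_subset_R hG

/-- Right sides decrease along arcs: follow a walk from a vertex of `R_τ` to `c_τ` until it
enters the ball of `τ`. -/
theorem Arc.R_subset_R (hG : G.Connected) {σ τ : GState G} (h : Arc σ τ) : τ.R ⊆ σ.R := by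
  have hdis : ∀ x ∈ τ.R, x ∉ Xball σ := fun x hx hx' => by
    have : x ∈ τ.L ∩ τ.R := ⟨h.Xball_subset_L hG hx', hx⟩
    rw [τ.disj] at this
    exact this
  have hc : τ.c ∉ τ.R := fun hc =>
    not_mem_Xball_of_mem_R hc (show G.dist τ.c τ.c ≤ τ.r by simp)
  have key : ∀ {x y : V} (_ : G.Walk x y), y ∉ τ.R → x ∈ τ.R → x ∈ σ.R := by
    intro x y p
    induction p with
    | nil => exact fun h1 h2 => absurd h2 h1
    | @cons u w _ huw _ ih =>
      intro hy hu
      have hw : w ∈ σ.R := by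
        by_cases hwX : w ∈ Xball τ
        · exact h.Xball_subset_R hG hwX
        · exact ih hy (mem_R_of_adj hu huw hwX)
      exact mem_R_of_adj hw huw.symm (hdis u hu)
  exact fun x hx => key (hG.exists_walk_length_eq_dist x τ.c).choose hc hx

theorem Arc.L_subset_L (hG : G.Connected) {σ τ : GState G} (h : Arc σ τ) : σ.L ⊆ τ.L :=
  h.swap.R_subset_R hG

end BD


/-- Along a directed path `σ 0, …, σ (t-1)` in the state digraph `D(H)`:
if `i < j` then `X_j ⊆ R_{σ_i}`, if `j < i` then `X_j ⊆ L_{σ_i}`; in particular the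
balls are pairwise disjoint. -/
theorem path_monotone_containment {V : Type*} [Fintype V] (H : SimpleGraph V)
    (hconn : H.Connected) (hcard : 1 < Fintype.card V)
    (t : ℕ) (σ : ℕ → BD.GState H)
    (hpath : ∀ i, i + 1 < t → BD.Arc (σ i) (σ (i + 1))) :
    (∀ i j, i < j → j < t → BD.Xball (σ j) ⊆ (σ i).R) ∧
    (∀ i j, j < i → i < t → BD.Xball (σ j) ⊆ (σ i).L) ∧
    (∀ i j, i < j → j < t → Disjoint (BD.Xball (σ i)) (BD.Xball (σ j))) := by
  have hR : ∀ d i, i + d + 1 < t → BD.Xball (σ (i + d + 1)) ⊆ (σ i).R := by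
    intro d
    induction d with
    | zero => exact fun i hi => (hpath i hi).Xball_subset_R hconn
    | succ d ih =>
      intro i hi
      have h := ih (i + 1) (by omega)
      rw [show i + 1 + d + 1 = i + (d + 1) + 1 by omega] at h
      exact h.trans ((hpath i (by omega)).R_subset_R hconn)
  have hL : ∀ d i, i + d + 1 < t → BD.Xball (σ i) ⊆ (σ (i + d + 1)).L := by
    intro d
    induction d with
    | zero => exact fun i hi => (hpath i hi).Xball_subset_L hconn
    | succ d ih =>
      exact fun i hi => (ih i (by omega)).trans ((hpath (i + d + 1) hi).L_subset_L hconn)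
  have hR' : ∀ i j, i < j → j < t → BD.Xball (σ j) ⊆ (σ i).R := by
    intro i j hij hj
    obtain ⟨d, rfl⟩ := Nat.exists_eq_add_of_lt hij
    exact hR d i hj
  refine ⟨hR', ?_, ?_⟩
  · intro i j hij hi
    obtain ⟨d, rfl⟩ := Nat.exists_eq_add_of_lt hij
    exact hL d j hi
  · intro i j hij hj
    exact Set.disjoint_right.mpr fun x hx => BD.not_mem_Xball_of_mem_R (hR' i j hij hj hx)
end

section
/- Let H be a finite connected simple graph with at least two vertices and let P = σ₁, …, σ_t be a directed path in the state digraph D(H) from a source state (L_{σ₁} = ∅) to a sink state (R_{σ_t} = ∅). Then the balls X_{σ₁}, …, X_{σ_t} cover every vertex of H: ⋃_{i=1}^t X_{σ_i} = V(H). -/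
/-!
Along an arc `σ → τ` the left side `τ.L` is contained in `σ.L ∪ X_σ`. Indeed `τ.L` is connected and
contains `c_σ ∈ X_σ`, and no edge inside `τ.L` leaves `σ.L ∪ X_σ`: such an edge would end in `σ.R`;
it cannot start in `σ.L`, which is a component of the residual graph different from `σ.R`
(`BD.not_adj_L_R`), and if it starts in `X_σ` then it ends in the right frontier of `σ`, which lies
in `X_τ` and hence misses `τ.L` (`BD.Arc.L_subset`). Starting from a source, induction shows that
the left side of each state is covered by the preceding balls; at a sink the left side is the whole
complement of the last ball.
-/


open scoped Classical

namespace BD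

variable {V : Type*} {G : SimpleGraph V}

theorem not_adj_L_R (σ : GState G) {u v : V} (hu : u ∈ σ.L) (hv : v ∈ σ.R) : ¬ G.Adj u v := by
  intro hadj
  rcases σ.hL with h | hL
  · simp [h] at hu
  rcases σ.hR with h | hR
  · simp [h] at hv
  -- An edge between the two components would make their union connected, against maximality.
  have hD := hL.2.2.2 (σ.L ∪ σ.R) Set.subset_union_left σ.union.le
    (SimpleGraph.connected_induce_union hL.2.2.1.preconnected hR.2.2.1.preconnected hu hv hadj)
  have hvL : v ∈ σ.L := hD ▸ Or.inr hv
  have : v ∈ σ.L ∩ σ.R := ⟨hvL, hv⟩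
  simp [σ.disj] at this

theorem mem_cases (σ : GState G) (x : V) : x ∈ Xball σ ∨ x ∈ σ.L ∨ x ∈ σ.R := by
  by_cases hx : x ∈ Xball σ
  · exact Or.inl hx
  · exact Or.inr (σ.union.ge hx)

theorem Arc.L_subset {σ τ : GState G} (h : Arc σ τ) : τ.L ⊆ σ.L ∪ Xball σ := by
  obtain ⟨-, hne, -, -, hc, hF, -⟩ := h
  rcases τ.hL with h0 | hL
  · simp [h0] at hne
  -- No edge inside `τ.L` leaves `σ.L ∪ X_σ`.
  have step : ∀ u v : τ.L, (G.induce τ.L).Adj u v → (u : V) ∈ σ.L ∪ Xball σ →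
      (v : V) ∈ σ.L ∪ Xball σ := by
    rintro ⟨u, hu⟩ ⟨v, hv⟩ hadj hmem
    have hadj' : G.Adj u v := hadj
    change v ∈ σ.L ∪ Xball σ
    by_contra hout
    have hvX : v ∉ Xball σ := fun h => hout (Or.inr h)
    have hvR : v ∈ σ.R := by
      rcases mem_cases σ v with h | h | h
      · exact absurd h hvX
      · exact absurd (Or.inl h) hout
      · exact h
    rcases hmem with huL | huX
    · exact not_adj_L_R σ huL hvR hadj'
    · exact τ.union.le (Or.inl hv) (hF ⟨⟨hvX, u, huX, hadj'⟩, hvR⟩)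
  have walk : ∀ u v : τ.L, (G.induce τ.L).Walk u v → (u : V) ∈ σ.L ∪ Xball σ →
      (v : V) ∈ σ.L ∪ Xball σ := by
    intro u v p
    induction p with
    | nil => exact id
    | cons hadj _ ih => exact fun hu => ih (step _ _ hadj hu)
  intro x hx
  obtain ⟨p⟩ := hL.2.2.1.preconnected ⟨σ.c, hc⟩ ⟨x, hx⟩
  exact walk _ _ p (Or.inr (by simp [Xball, ball]))

end BD

/-- The balls of a source-to-sink directed path in the state digraph `D(H)`
cover every vertex of `H`. -/
theorem path_balls_cover {V : Type*} [Fintype V] (H : SimpleGraph V)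
    (hconn : H.Connected) (hcard : 1 < Fintype.card V)
    (t : ℕ) (ht : 1 ≤ t) (σ : ℕ → BD.GState H)
    (hpath : ∀ i, i + 1 < t → BD.Arc (σ i) (σ (i + 1)))
    (hsource : (σ 0).L = ∅) (hsink : (σ (t - 1)).R = ∅) :
    (⋃ i ∈ Finset.range t, BD.Xball (σ i)) = Set.univ := by
  have left_covered : ∀ k, k < t → ∀ x ∈ (σ k).L, ∃ i < k, x ∈ BD.Xball (σ i) := by
    intro k
    induction k with
    | zero => intro _ x hx; simp [hsource] at hx
    | succ k ih =>
      intro hk x hx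
      rcases (hpath k hk).L_subset hx with h | h
      · obtain ⟨i, hi, hxi⟩ := ih (by omega) x h
        exact ⟨i, by omega, hxi⟩
      · exact ⟨k, by omega, h⟩
  refine Set.eq_univ_of_forall fun x => ?_
  simp only [Set.mem_iUnion, Finset.mem_range, exists_prop]
  rcases BD.mem_cases (σ (t - 1)) x with h | h | h
  · exact ⟨t - 1, by omega, h⟩
  · obtain ⟨i, hi, hxi⟩ := left_covered (t - 1) (by omega) x h
    exact ⟨i, by omega, hxi⟩
  · simp [hsink] at h
end

section
/- Let H be a finite connected simple graph with at least two vertices and let f be an efficient dominating broadcast of H whose domination graph H_f is a path with active vertices ordered a₁, …, a_t along the path. Let p_i = f(a_i), X_i = B(a_i,p_i), L_i = ⋃_{j<i} X_j, and R_i = ⋃_{j>i} X_j. Then for every i, no edge of H joins L_i to R_i, and the nonempty sets among L_i and R_i are exactly the connected components of H − X_i. -/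
/-!
Every ball is connected, since a shortest walk from its centre stays inside it
(`BD.ball_induce_connected`), and consecutive balls along the path are joined by an edge, so
the union of a block of consecutive balls is connected (`BD.iUnion_Icc_connected`). In
particular each side `L`, `R` of the ball `X_i` is connected or empty. An edge between the two
sides would make two non-consecutive active vertices adjacent in the domination graph, so there
is none. Domination and efficiency say that `L ∪ R` is exactly the complement of `X_i`. A
connected subset of `L ∪ R` meeting one side therefore lies in that side
(`BD.subset_of_connected`), which gives both maximality of the sides and the absence of other
components.
-/

open scoped Classical

namespace BD

variable {V : Type*}

theorem ball_induce_connected {G : SimpleGraph V} (hG : G.Connected) (v : V) (p : ℕ) :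
    (G.induce (ball G v p)).Connected := by
  have hv : v ∈ ball G v p := by simp [ball]
  refine SimpleGraph.induce_connected_of_patches v hv ?_
  intro x hx
  obtain ⟨w, hw⟩ := hG.exists_walk_length_eq_dist v x
  refine ⟨{y | y ∈ w.support}, ?_, w.start_mem_support, w.end_mem_support,
    w.connected_induce_support _ _⟩
  intro y hy
  -- the initial segment of the shortest walk up to `y` has length at most `dist v x`
  have h1 := SimpleGraph.dist_le (w.takeUntil y hy)
  have h2 := w.length_takeUntil_le_length hy
  have hx' : G.dist v x ≤ p := hx
  change G.dist v y ≤ p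
  omega

theorem iUnion_Icc_connected {G : SimpleGraph V} (X : ℕ → Set V) (m n : ℕ) (hmn : m ≤ n)
    (hX : ∀ j, m ≤ j → j ≤ n → (G.induce (X j)).Connected)
    (hadj : ∀ j, m ≤ j → j + 1 ≤ n → ∃ x ∈ X j, ∃ y ∈ X (j + 1), G.Adj x y) :
    (G.induce (⋃ j ∈ Set.Icc m n, X j)).Connected := by
  induction n, hmn using Nat.le_induction with
  | base =>
    have hU : (⋃ j ∈ Set.Icc m m, X j) = X m := by rw [Set.Icc_self, Set.biUnion_singleton]
    rw [hU]
    exact hX m le_rfl le_rfl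
  | succ n hmn ih =>
    obtain ⟨x, hx, y, hy, hxy⟩ := hadj n hmn le_rfl
    have hU : (⋃ j ∈ Set.Icc m (n + 1), X j) = (⋃ j ∈ Set.Icc m n, X j) ∪ X (n + 1) := by
      rw [← Set.insert_Icc_right_eq_Icc_add_one (by omega), Set.biUnion_insert, Set.union_comm]
    rw [hU]
    exact SimpleGraph.connected_induce_union
      (ih (fun j h h' => hX j h (by omega)) (fun j h h' => hadj j h (by omega))).preconnected
      (hX _ (by omega) le_rfl).preconnected (Set.mem_biUnion (Set.mem_Icc.2 ⟨hmn, le_rfl⟩) hx) hy hxy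

/-- A connected set cannot leave `A` inside `A ∪ B` when no edge joins `A` to `B`. -/
theorem subset_of_connected {G : SimpleGraph V} {A B D : Set V}
    (hAB : ¬ ∃ x ∈ A, ∃ y ∈ B, G.Adj x y) (hD : (G.induce D).Connected)
    (hDS : D ⊆ A ∪ B) (hne : (D ∩ A).Nonempty) : D ⊆ A := by
  obtain ⟨x, hxD, hxA⟩ := hne
  have key : ∀ u v : D, (G.induce D).Walk u v → (u : V) ∈ A → (v : V) ∈ A := by
    intro u v w
    induction w with
    | nil => exact id
    | @cons u v _ h _ ih =>
      intro hu
      refine ih ((hDS v.2).resolve_right fun hv => hAB ⟨u, hu, v, hv, ?_⟩)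
      simpa using h
  intro y hy
  obtain ⟨w⟩ := hD.preconnected ⟨x, hxD⟩ ⟨y, hy⟩
  exact key _ _ w hxA

theorem isCompOf_left {G : SimpleGraph V} {A B : Set V}
    (hAB : ¬ ∃ x ∈ A, ∃ y ∈ B, G.Adj x y) (hA : (G.induce A).Connected) (hne : A.Nonempty) :
    IsCompOf G (A ∪ B) A := by
  refine ⟨hne, Set.subset_union_left, hA, fun D hAD hDS hD => ?_⟩
  obtain ⟨x, hx⟩ := hne
  exact (subset_of_connected hAB hD hDS ⟨x, hAD hx, hx⟩).antisymm hAD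

theorem IsCompOf.eq_left {G : SimpleGraph V} {A B C : Set V}
    (hAB : ¬ ∃ x ∈ A, ∃ y ∈ B, G.Adj x y) (hA : (G.induce A).Connected)
    (hC : IsCompOf G (A ∪ B) C) (hne : (C ∩ A).Nonempty) : C = A :=
  (hC.2.2.2 A (subset_of_connected hAB hC.2.2.1 hC.2.1 hne) Set.subset_union_left hA).symm

end BD

/-- For an efficient dominating broadcast `f` of `H` whose domination graph
is a path with active vertices ordered `a 0, …, a (t-1)` along the path, and with
`L_i = ⋃_{j<i} X_j` and `R_i = ⋃_{j>i} X_j`: no edge of `H` joins `L_i` to `R_i`, and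
the nonempty sets among `L_i, R_i` are exactly the connected components of `H − X_i`. -/
theorem ordered_path_sides {V : Type*} [Fintype V] (H : SimpleGraph V)
    (hconn : H.Connected) (hcard : 1 < Fintype.card V)
    (f : V → ℕ) (hdom : BD.Dominating H f) (heff : BD.Efficient H f)
    (t : ℕ) (ht : 1 ≤ t) (a : ℕ → V)
    (hinj : ∀ i j, i < t → j < t → a i = a j → i = j)
    (hact : ∀ v, 0 < f v ↔ ∃ i, i < t ∧ a i = v)
    (horder : ∀ i j, i < t → j < t →
      (BD.DomAdj H f (a i) (a j) ↔ (i + 1 = j ∨ j + 1 = i))) :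
    ∀ i, i < t → ∀ L R : Set V,
      L = (⋃ j ∈ Set.Iio i, BD.ball H (a j) (f (a j))) →
      R = (⋃ j ∈ Set.Ioo i t, BD.ball H (a j) (f (a j))) →
      (¬ ∃ x ∈ L, ∃ y ∈ R, H.Adj x y) ∧
      (L.Nonempty → BD.IsCompOf H ((BD.ball H (a i) (f (a i)))ᶜ) L) ∧
      (R.Nonempty → BD.IsCompOf H ((BD.ball H (a i) (f (a i)))ᶜ) R) ∧
      (∀ C : Set V, BD.IsCompOf H ((BD.ball H (a i) (f (a i)))ᶜ) C → C = L ∨ C = R) := by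
  intro i hi L R hL hR
  have hpos : ∀ j, j < t → 0 < f (a j) := fun j hj => (hact _).2 ⟨j, hj, rfl⟩
  have hmemL : ∀ x, x ∈ L ↔ ∃ j, j < i ∧ x ∈ BD.ball H (a j) (f (a j)) := by
    intro x; simp [hL]
  have hmemR : ∀ x, x ∈ R ↔ ∃ j, (i < j ∧ j < t) ∧ x ∈ BD.ball H (a j) (f (a j)) := by
    intro x; simp [hR]
  have hno : ¬ ∃ x ∈ L, ∃ y ∈ R, H.Adj x y := by
    rintro ⟨x, hx, y, hy, hxy⟩
    obtain ⟨j, hj, hxj⟩ := (hmemL x).1 hx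
    obtain ⟨k, ⟨hik, hk⟩, hyk⟩ := (hmemR y).1 hy
    have hjt : j < t := by omega
    have hne : a j ≠ a k := fun h => by
      have := hinj j k hjt hk h
      omega
    have := (horder j k hjt hk).1 ⟨hpos j hjt, hpos k hk, hne, x, hxj, y, hyk, hxy⟩
    omega
  have hno' : ¬ ∃ x ∈ R, ∃ y ∈ L, H.Adj x y :=
    fun ⟨x, hx, y, hy, h⟩ => hno ⟨y, hy, x, hx, h.symm⟩
  have hS : (BD.ball H (a i) (f (a i)))ᶜ = L ∪ R := by
    ext x
    rw [Set.mem_compl_iff, Set.mem_union, hmemL, hmemR]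
    constructor
    · intro hx
      obtain ⟨v, hv, hxv⟩ := hdom x
      obtain ⟨j, hj, rfl⟩ := (hact v).1 hv
      rcases lt_trichotomy j i with h | rfl | h
      · exact Or.inl ⟨j, h, hxv⟩
      · exact absurd hxv hx
      · exact Or.inr ⟨j, ⟨h, hj⟩, hxv⟩
    · intro h hx
      obtain ⟨j, hj, hji, hxj⟩ : ∃ j, j < t ∧ j ≠ i ∧ x ∈ BD.ball H (a j) (f (a j)) := by
        rcases h with ⟨j, h, hxj⟩ | ⟨j, ⟨h, h'⟩, hxj⟩
        · exact ⟨j, by omega, by omega, hxj⟩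
        · exact ⟨j, h', by omega, hxj⟩
      exact Set.disjoint_left.1
        (heff _ _ (hpos j hj) (hpos i hi) fun h => hji (hinj j i hj hi h)) hxj hx
  have hblock : ∀ m n, m ≤ n → n < t →
      (H.induce (⋃ j ∈ Set.Icc m n, BD.ball H (a j) (f (a j)))).Connected := by
    intro m n hmn hn
    refine BD.iUnion_Icc_connected (fun j => BD.ball H (a j) (f (a j))) m n hmn
      (fun j _ _ => BD.ball_induce_connected hconn _ _) fun j _ hj => ?_
    exact ((horder j (j + 1) (by omega) (by omega)).2 (Or.inl rfl)).2.2.2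
  have hLc : L.Nonempty → (H.induce L).Connected := by
    rintro ⟨x, hx⟩
    obtain ⟨j, hj, -⟩ := (hmemL x).1 hx
    have hI : Set.Iio i = Set.Icc 0 (i - 1) := by
      ext k; simp only [Set.mem_Iio, Set.mem_Icc]; omega
    rw [hL, hI]
    exact hblock _ _ (by omega) (by omega)
  have hRc : R.Nonempty → (H.induce R).Connected := by
    rintro ⟨x, hx⟩
    obtain ⟨j, hj, -⟩ := (hmemR x).1 hx
    have hI : Set.Ioo i t = Set.Icc (i + 1) (t - 1) := by
      ext k; simp only [Set.mem_Ioo, Set.mem_Icc]; omega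
    rw [hR, hI]
    exact hblock _ _ (by omega) (by omega)
  rw [hS]
  refine ⟨hno, fun h => BD.isCompOf_left hno (hLc h) h, fun h => ?_, fun C hC => ?_⟩
  · rw [Set.union_comm]
    exact BD.isCompOf_left hno' (hRc h) h
  · obtain ⟨x, hx⟩ := hC.1
    rcases hC.2.1 hx with hxL | hxR
    · exact Or.inl (hC.eq_left hno (hLc ⟨x, hxL⟩) ⟨x, hx, hxL⟩)
    · rw [Set.union_comm] at hC
      exact Or.inr (hC.eq_left hno' (hRc ⟨x, hxR⟩) ⟨x, hx, hxR⟩)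
end

section
/- Let H be a finite connected simple graph with at least two vertices and let f be an efficient dominating broadcast of H whose domination graph H_f is a path with active vertices ordered a₁, …, a_t along the path, where t ≥ 2. With p_i = f(a_i), X_i = B(a_i,p_i), and R_i = ⋃_{j>i} X_j, for every i < t it holds that dist(a_i,a_{i+1}) = p_i + p_{i+1} + 1 and N(X_i) ∩ R_i ⊆ X_{i+1}, where N(X_i) is the set of vertices outside X_i adjacent to X_i. -/
/-! Consecutive active vertices `u`, `v` are adjacent in the domination graph, so an edge joins
their balls and `dist u v ≤ f u + 1 + f v`. If the distance were at most `f u + f v`, a geodesic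
from `u` to `v` would contain a vertex within `f u` of `u` and within `f v` of `v`, so the two balls
would meet, contradicting efficiency (`dist_gt_of_disjoint_balls`). For the inclusion, a neighbor
of `X_i` lying in `X_j` with `j > i` makes `a_i` and `a_j` adjacent in the domination graph, and the
path order forces `j = i + 1`. -/

open scoped Classical

theorem dist_gt_of_disjoint_balls {V : Type*} {H : SimpleGraph V} (hconn : H.Connected)
    {u v : V} {p q : ℕ} (h : Disjoint (BD.ball H u p) (BD.ball H v q)) :
    p + q < H.dist u v := by
  by_contra! hle
  obtain ⟨w, hw⟩ := hconn.exists_walk_length_eq_dist u v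
  -- the vertex at position `p` of a geodesic (its endpoint `v` if the geodesic is shorter)
  have h1 : H.dist u (w.getVert p) ≤ p :=
    (SimpleGraph.dist_le (w.take p)).trans (by simp)
  have h2 : H.dist v (w.getVert p) ≤ q := by
    rw [SimpleGraph.dist_comm]
    refine (SimpleGraph.dist_le (w.drop p)).trans ?_
    rw [SimpleGraph.Walk.drop_length]
    omega
  exact Set.disjoint_left.mp h h1 h2

/-- For an efficient dominating broadcast `f` of `H` whose domination graph
is a path with active vertices ordered `a 0, …, a (t-1)` along the path (`t ≥ 2`): for
every consecutive pair, `dist(a_i, a_{i+1}) = p_i + p_{i+1} + 1` and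
`N(X_i) ∩ R_i ⊆ X_{i+1}`. -/
theorem ordered_path_tight {V : Type*} [Fintype V] (H : SimpleGraph V)
    (hconn : H.Connected) (hcard : 1 < Fintype.card V)
    (f : V → ℕ) (hdom : BD.Dominating H f) (heff : BD.Efficient H f)
    (t : ℕ) (ht : 2 ≤ t) (a : ℕ → V)
    (hinj : ∀ i j, i < t → j < t → a i = a j → i = j)
    (hact : ∀ v, 0 < f v ↔ ∃ i, i < t ∧ a i = v)
    (horder : ∀ i j, i < t → j < t →
      (BD.DomAdj H f (a i) (a j) ↔ (i + 1 = j ∨ j + 1 = i))) :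
    ∀ i, i + 1 < t →
      H.dist (a i) (a (i + 1)) = f (a i) + f (a (i + 1)) + 1 ∧
      BD.nbhd H (BD.ball H (a i) (f (a i))) ∩
          (⋃ j ∈ Set.Ioo i t, BD.ball H (a j) (f (a j)))
        ⊆ BD.ball H (a (i + 1)) (f (a (i + 1))) := by
  intro i hi
  have hact' : ∀ j, j < t → 0 < f (a j) := fun j hj => (hact _).2 ⟨j, hj, rfl⟩
  have hne : ∀ j, i < j → j < t → a i ≠ a j := fun j hij hj h =>
    hij.ne (hinj i j (by omega) hj h)
  refine ⟨le_antisymm ?_ ?_, ?_⟩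
  · obtain ⟨-, -, -, x, hx, y, hy, hxy⟩ := (horder i (i + 1) (by omega) hi).2 (Or.inl rfl)
    change H.dist _ _ ≤ _ at hx hy
    have h1 := hconn.dist_triangle (u := a i) (v := x) (w := a (i + 1))
    have h2 := hconn.dist_triangle (u := x) (v := y) (w := a (i + 1))
    have h3 : H.dist x y = 1 := SimpleGraph.dist_eq_one_iff_adj.2 hxy
    rw [SimpleGraph.dist_comm] at hy
    omega
  · exact dist_gt_of_disjoint_balls hconn
      (heff _ _ (hact' i (by omega)) (hact' _ hi) (hne _ (by omega) hi))
  · rintro x ⟨⟨-, y, hy, hyx⟩, hx⟩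
    simp only [Set.mem_iUnion, Set.mem_Ioo] at hx
    obtain ⟨j, ⟨hij, hj⟩, hxj⟩ := hx
    have hadj : BD.DomAdj H f (a i) (a j) :=
      ⟨hact' i (by omega), hact' j hj, hne j hij hj, y, hy, x, hxj, hyx⟩
    obtain rfl : i + 1 = j := by
      have := (horder i j (by omega) hj).1 hadj
      omega
    exact hxj
end

section
/- Let G be a finite connected simple graph, let x be a vertex and k ≥ 1 an integer, and let H be the subgraph of G induced on V(G) \ B_G(x,k), assumed nonempty. If g : V(H) → ℕ is a dominating broadcast of H (with respect to distances in H), then the broadcast f on G defined by f(x) = k, f(v) = g(v) for v ∈ V(H), and f(v) = 0 for all other vertices, is a dominating broadcast of G. -/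
/-!
A vertex of `B(x,k)` is covered by `x` itself, which is active because `1 ≤ k`. A vertex outside
this ball is covered in the residual graph `H` by a vertex active for `g`; the same vertex covers
it in `G`, since distances in `G` are at most the distances in an induced subgraph.
-/

open scoped Classical

/-- If `g` is a dominating broadcast of the (nonempty) residual graph
`H = G[V ∖ B(x,k)]` with respect to distances in `H`, then assigning `k` to `x`, `g` on
`V(H)`, and `0` elsewhere yields a dominating broadcast of `G`. -/
theorem extend_residual_broadcast {V : Type*} [Fintype V] (G : SimpleGraph V)
    (hG : G.Connected) (x : V) (k : ℕ) (hk : 1 ≤ k)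
    (hne : ((BD.ball G x k)ᶜ : Set V).Nonempty)
    (g : ((BD.ball G x k)ᶜ : Set V) → ℕ)
    (hg : ∀ u : ((BD.ball G x k)ᶜ : Set V),
      ∃ v : ((BD.ball G x k)ᶜ : Set V), 0 < g v ∧
        ∃ w : (G.induce ((BD.ball G x k)ᶜ : Set V)).Walk v u, w.length ≤ g v) :
    BD.Dominating G (fun v =>
      if h : v ∈ ((BD.ball G x k)ᶜ : Set V) then g ⟨v, h⟩
      else if v = x then k else 0) := by
  intro u
  by_cases hu : u ∈ BD.ball G x k
  · have hx : x ∉ ((BD.ball G x k)ᶜ : Set V) := by simp [BD.ball]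
    refine ⟨x, ?_, ?_⟩
    · simp only [dif_neg hx, if_true]
      exact hk
    · simp only [dif_neg hx, if_true]
      exact hu
  · obtain ⟨v, hv, w, hw⟩ := hg ⟨u, hu⟩
    refine ⟨v, ?_, ?_⟩
    · simp only [dif_pos v.2]
      exact hv
    · simp only [dif_pos v.2]
      -- A walk in the induced subgraph is a walk of the same length in `G`,
      -- so passing from the residual graph to `G` does not increase distances.
      have h := SimpleGraph.dist_le (w.map (SimpleGraph.Embedding.induce _).toHom)
      rw [SimpleGraph.Walk.length_map] at h
      exact h.trans hw
end

section
/- Let G be a finite connected simple graph and let f be an efficient dominating broadcast of G. Let x be an active vertex with k = f(x), and suppose H = G[V(G) \ B_G(x,k)] is nonempty and connected. Then the restriction of f to V(H) is a dominating broadcast of H with respect to distances in H: for every vertex u of H there is an active vertex a ∈ V(H) with dist_H(a,u) ≤ f(a). -/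
/-! A vertex `u` outside the ball of `x` lies in the ball of some active `a ≠ x`. Every vertex of a
`G`-geodesic from `a` to `u` is at distance at most `dist a u ≤ f a` from `a`, so it lies in the ball
of `a` and, by efficiency, outside the ball of `x`. The geodesic is therefore a walk of the
residual graph, which bounds the residual distance by `f a`. -/

open scoped Classical

/-- If `f` is an efficient dominating broadcast of a connected graph `G`,
`x` is active with `k = f(x)`, and `H = G[V ∖ B(x,k)]` is nonempty and connected, then
the restriction of `f` to `V(H)` dominates `H` with respect to distances in `H`. -/
theorem restriction_dominates_residual {V : Type*} [Fintype V] (G : SimpleGraph V)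
    (hG : G.Connected)
    (f : V → ℕ) (hdom : BD.Dominating G f) (heff : BD.Efficient G f)
    (x : V) (hx : 0 < f x)
    (hne : ((BD.ball G x (f x))ᶜ : Set V).Nonempty)
    (hconn : (G.induce ((BD.ball G x (f x))ᶜ : Set V)).Connected) :
    ∀ u : ((BD.ball G x (f x))ᶜ : Set V),
      ∃ a : ((BD.ball G x (f x))ᶜ : Set V), 0 < f a.1 ∧
        (G.induce ((BD.ball G x (f x))ᶜ : Set V)).dist a u ≤ f a.1 := by
  intro u
  obtain ⟨a, ha, hau⟩ := hdom u.1
  -- An active vertex other than `x` covers `u`, since `u` is outside the ball of `x`.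
  have hax : a ≠ x := by
    rintro rfl
    exact u.2 hau
  obtain ⟨p, hp⟩ := hG.exists_walk_length_eq_dist a u.1
  -- A geodesic from `a` to `u` stays in the ball of `a`, which misses the ball of `x`.
  have hsupp : ∀ w ∈ p.support, w ∈ ((BD.ball G x (f x))ᶜ : Set V) := by
    intro w hw
    have hle : G.dist a w ≤ f a :=
      ((SimpleGraph.dist_le (p.takeUntil w hw)).trans (p.length_takeUntil_le_length hw)).trans
        (hp.trans_le hau)
    exact Set.disjoint_left.mp (heff a x ha hx hax) hle
  have hlen : (p.induce _ hsupp).length = p.length := by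
    rw [← SimpleGraph.Walk.length_map (SimpleGraph.Embedding.induce _).toHom,
      SimpleGraph.Walk.map_induce]
    rfl
  exact ⟨⟨a, hsupp a p.start_mem_support⟩, ha,
    (SimpleGraph.dist_le (p.induce _ hsupp)).trans (hlen.trans_le (hp.trans_le hau))⟩
end

section
/- Let G be a finite connected simple graph with at least two vertices, let f be an efficient dominating broadcast of G of minimum cost among all dominating broadcasts of G, and let x be an active vertex with k = f(x) such that H = G[V(G) \ B_G(x,k)] is nonempty, connected, and satisfies γ_b(H) = γ_path(H). Then k + γ_path(H) = cost(f) = γ_b(G). -/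
/-! The complement `H` of the ball `B(x, f x)` splits off additively: `γ_b(G) = f x + γ_b(H)`.

For `γ_b(H) ≤ cost f - f x`, restrict `f` to `H`: by efficiency the ball of an active vertex
`v ≠ x` misses `B(x, f x)`, and it contains every geodesic of `G` from `v` to one of its vertices.
Such geodesics therefore survive in `H`, so the restriction dominates `H`, and all active vertices
other than `x` lie in `H` (`dominating_restrict`, `cost_restrict`). For the converse, extend a
dominating broadcast of `H` by the value `f x` at `x`; distances only shrink in passing from the
connected graph `H` to `G`, so the extension dominates `G` (`gammaB_le_add`). The hypothesis
`γ_b(H) = γ_path(H)` then gives the claim for `γ_path`. -/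

open scoped Classical

namespace BD

variable {V : Type*}

/-- A `G`-ball inside `S` keeps its geodesics from the centre in the graph induced on `S`. -/
lemma induce_dist_le {G : SimpleGraph V} {S : Set V} {a b : S} {n : ℕ}
    (hG : G.Connected) (hS : G.dist a b ≤ n) (hb : ball G a n ⊆ S) :
    (G.induce S).dist a b ≤ n := by
  obtain ⟨p, hp⟩ := hG.exists_walk_length_eq_dist (a : V) b
  have hsup : ∀ w ∈ p.support, w ∈ S := fun w hw => hb <|
    (SimpleGraph.dist_le (p.takeUntil w hw)).trans <|
      (p.length_takeUntil_le_length hw).trans (hp.trans_le hS)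
  have hlen : (p.induce S hsup).length = p.length := by
    have h := congrArg SimpleGraph.Walk.length (p.map_induce hsup)
    rwa [SimpleGraph.Walk.length_map] at h
  exact (SimpleGraph.dist_le (p.induce S hsup)).trans (hlen.trans_le (hp.trans_le hS))

lemma dist_le_induce_dist {G : SimpleGraph V} {S : Set V} (hS : (G.induce S).Connected)
    (a b : S) : G.dist a b ≤ (G.induce S).dist a b := by
  obtain ⟨p, hp⟩ := hS.exists_walk_length_eq_dist a b
  rw [← hp, ← p.length_map (SimpleGraph.Embedding.induce S).toHom]
  exact SimpleGraph.dist_le _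

lemma mem_ball_self (G : SimpleGraph V) (v : V) (p : ℕ) : v ∈ ball G v p := by
  simp [ball]

lemma ball_subset_compl {G : SimpleGraph V} {f : V → ℕ} (heff : Efficient G f) {x v : V}
    (hx : 0 < f x) (hv : 0 < f v) (hvx : v ≠ x) : ball G v (f v) ⊆ (ball G x (f x))ᶜ :=
  (heff v x hv hx hvx).subset_compl_right

/-- Outside an efficient ball, the remaining balls dominate the residual graph intrinsically. -/
lemma dominating_restrict {G : SimpleGraph V} (hG : G.Connected) {f : V → ℕ}
    (hdom : Dominating G f) (heff : Efficient G f) {x : V} (hx : 0 < f x) :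
    Dominating (G.induce ((ball G x (f x))ᶜ : Set V)) (fun v => f v) := by
  intro u
  obtain ⟨v, hv, huv⟩ := hdom u
  have hvx : v ≠ x := by
    rintro rfl
    exact u.2 huv
  have hsub := ball_subset_compl heff hx hv hvx
  exact ⟨⟨v, hsub (mem_ball_self G v _)⟩, hv, induce_dist_le hG huv hsub⟩

/-- The cost of a broadcast that vanishes on `S` away from `x ∈ S`. -/
lemma cost_eq_add [Fintype V] {S : Set V} [Fintype (Sᶜ : Set V)] {x : V} (hxS : x ∈ S)
    {f : V → ℕ} (h0 : ∀ v ∈ S, v ≠ x → f v = 0) :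
    cost f = f x + cost (fun v : (Sᶜ : Set V) => f v) := by
  unfold cost
  rw [← Finset.add_sum_erase _ _ (Finset.mem_univ x)]
  congr 1
  have h1 : ∑ v : (Sᶜ : Set V), f v = ∑ v ∈ Finset.univ.filter (· ∈ Sᶜ), f v :=
    (Finset.sum_subtype _ (by simp) _).symm
  rw [h1]
  refine (Finset.sum_subset (fun v hv => ?_) (fun v hv hv' => ?_)).symm
  · refine Finset.mem_erase.mpr ⟨?_, Finset.mem_univ v⟩
    rintro rfl
    exact (Finset.mem_filter.mp hv).2 hxS
  · exact h0 v (by simpa using hv') (Finset.ne_of_mem_erase hv)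

lemma cost_restrict [Fintype V] {G : SimpleGraph V} {f : V → ℕ} (heff : Efficient G f) {x : V}
    (hx : 0 < f x) [Fintype ((ball G x (f x))ᶜ : Set V)] :
    f x + cost (fun v : ((ball G x (f x))ᶜ : Set V) => f v) = cost f := by
  refine (cost_eq_add (mem_ball_self G x _) fun v hv hvx => ?_).symm
  by_contra h
  exact ball_subset_compl heff hx (Nat.pos_of_ne_zero h) hvx (mem_ball_self G v _) hv

lemma gammaB_le_cost [Fintype V] {G : SimpleGraph V} {g : V → ℕ} (hg : Dominating G g) :
    gammaB G ≤ cost g :=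
  Nat.sInf_le ⟨g, hg, rfl⟩

/-- The infimum defining `γ_b` is attained as soon as some dominating broadcast exists. -/
lemma exists_cost_eq_gammaB [Fintype V] {G : SimpleGraph V} {g : V → ℕ} (hg : Dominating G g) :
    ∃ h, Dominating G h ∧ cost h = gammaB G :=
  Nat.sInf_mem (s := {c | ∃ h, Dominating G h ∧ cost h = c}) ⟨_, g, hg, rfl⟩

/-- A dominating broadcast of the complement of a ball, together with that ball, dominates `G`. -/
lemma gammaB_le_add [Fintype V] {G : SimpleGraph V} {x : V} {k : ℕ} (hk : 0 < k)
    [Fintype ((ball G x k)ᶜ : Set V)]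
    (hconn : (G.induce ((ball G x k)ᶜ : Set V)).Connected)
    {g : ((ball G x k)ᶜ : Set V) → ℕ} (hg : Dominating (G.induce ((ball G x k)ᶜ : Set V)) g) :
    gammaB G ≤ k + cost g := by
  let g' : V → ℕ := fun v => if h : v ∈ (ball G x k)ᶜ then g ⟨v, h⟩ else if v = x then k else 0
  have hgx : g' x = k := by
    simp [g', mem_ball_self]
  have hgH : ∀ v : ((ball G x k)ᶜ : Set V), g' v = g v := fun v => dif_pos v.2
  refine Nat.sInf_le ⟨g', fun u => ?_, ?_⟩
  · by_cases hu : u ∈ (ball G x k)ᶜ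
    · obtain ⟨v, hv, huv⟩ := hg ⟨u, hu⟩
      refine ⟨v, by rwa [hgH], ?_⟩
      rw [hgH]
      exact (dist_le_induce_dist hconn v ⟨u, hu⟩).trans huv
    · refine ⟨x, by rwa [hgx], ?_⟩
      rw [hgx]
      exact not_not.mp hu
  · have h0 : ∀ v ∈ ball G x k, v ≠ x → g' v = 0 := fun v hv hvx => by
      simp [g', hv, hvx]
    rw [cost_eq_add (mem_ball_self G x k) h0, hgx]
    simp only [hgH]

end BD

/-- If `f` is an efficient dominating broadcast of minimum cost of a
connected graph `G` with at least two vertices, `x` is active with `k = f(x)`, and the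
residual graph `H = G[V ∖ B(x,k)]` is nonempty, connected, and satisfies
`γ_b(H) = γ_path(H)`, then `k + γ_path(H) = cost(f) = γ_b(G)`. -/
theorem peel_optimal {V : Type*} [Fintype V] (G : SimpleGraph V)
    (hG : G.Connected) (hcard : 1 < Fintype.card V)
    (f : V → ℕ) (hdom : BD.Dominating G f) (heff : BD.Efficient G f)
    (hopt : BD.cost f = BD.gammaB G)
    (x : V) (hx : 0 < f x)
    (hne : ((BD.ball G x (f x))ᶜ : Set V).Nonempty)
    (hconn : (G.induce ((BD.ball G x (f x))ᶜ : Set V)).Connected)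
    (hgb : BD.gammaB (G.induce ((BD.ball G x (f x))ᶜ : Set V)) =
        BD.gammaPath (G.induce ((BD.ball G x (f x))ᶜ : Set V))) :
    f x + BD.gammaPath (G.induce ((BD.ball G x (f x))ᶜ : Set V)) = BD.cost f ∧
    BD.cost f = BD.gammaB G := by
  refine ⟨?_, hopt⟩
  rw [← hgb]
  have hres := BD.dominating_restrict hG hdom heff hx
  apply le_antisymm
  · rw [← BD.cost_restrict heff hx]
    exact Nat.add_le_add_left (BD.gammaB_le_cost hres) _
  · obtain ⟨g, hg, hcost⟩ := BD.exists_cost_eq_gammaB hres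
    rw [hopt, ← hcost]
    exact BD.gammaB_le_add hx hconn hg
end
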